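/- For every real k > 0 and every real x > 0 there exist constants β > 0 and C > 0 such that for all integers μ ≥ 0: ‖Γ(1/2+μ+ik)‖·‖E(k,μ,x)‖ ≤ C·e^{−βμ}. (Equivalently, |𝖯^{μ}_{ik−1/2}(cosh x)| ≤ C·e^{−βμ}/‖Γ(1/2−μ+ik)‖ for large μ; moreover β = β_x can be chosen increasing in x.) -/

import Mathlib

open Real

/-- The Gauss hypergeometric series `₂F₁(a,b,c;z)`. -/
noncomputable def hyp2F1 (a b c z : ℂ) : ℂ :=
  ∑' n : ℕ, (ascPochhammer ℂ n).eval a * (ascPochhammer ℂ n).eval b /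
      ((ascPochhammer ℂ n).eval c * (n.factorial : ℂ)) * z ^ n

/-- `E(k,μ,x) = 2^{-μ} (tanh x)^{μ+1/2} (cosh x)^{-ik} (1/μ!)
  ₂F₁((μ+1/2+ik)/2, (μ+3/2+ik)/2, μ+1; tanh² x)`,
the weighted conical associated Legendre function `√(sinh x) 𝖯^{-μ}_{ik-1/2}(cosh x)`. -/
noncomputable def legE (k : ℝ) (μ : ℕ) (x : ℝ) : ℂ :=
  (2 : ℂ) ^ (-(μ : ℂ)) * ((Real.tanh x ^ ((μ : ℝ) + 1 / 2) : ℝ) : ℂ) *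
    ((Real.cosh x : ℂ) ^ (-(Complex.I * k))) * ((μ.factorial : ℂ))⁻¹ *
    hyp2F1 (((μ : ℂ) + 1 / 2 + Complex.I * k) / 2)
      (((μ : ℂ) + 3 / 2 + Complex.I * k) / 2) ((μ : ℂ) + 1)
      ((Real.tanh x ^ 2 : ℝ) : ℂ)

/-!
By the duplication formula `4ⁿ (a/2)ₙ ((a+1)/2)ₙ = (a)₂ₙ`, multiplying the `n`-th hypergeometric
coefficient by `Γ(a)`, where `a = μ + 1/2 + ik`, merges all numerators into `4⁻ⁿ Γ(a + 2n)`, whose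
modulus is at most `4⁻ⁿ √π (μ + 2n)!`. The binomial bound `(μ + 2n)! ≤ 2^(μ + 2n) (μ + n)! n!` then
cancels `4⁻ⁿ` and the factorials, so `Γ(a) ₂F₁` is dominated by `√π μ! 2^μ` times a geometric
series in `tanh² x`. The prefactor of `E` removes `μ! 2^μ` and leaves `(tanh x)^μ`, with
`0 < tanh x < 1`. None of the constants depend on `k`.
-/

open scoped Nat

theorem factorial_add_le_two_pow_mul (m n : ℕ) : (m + n)! ≤ 2 ^ (m + n) * (m ! * n !) := by
  rw [← Nat.add_choose_mul_factorial_mul_factorial, mul_assoc]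
  gcongr
  exact Nat.choose_le_two_pow _ _

theorem ascPochhammer_eval_two_mul {K : Type*} [Field K] [NeZero (2 : K)] (a : K) (n : ℕ) :
    (ascPochhammer K (2 * n)).eval a =
      4 ^ n * ((ascPochhammer K n).eval (a / 2) * (ascPochhammer K n).eval ((a + 1) / 2)) := by
  induction n with
  | zero => simp
  | succ n ih =>
    have h2 : (2 : K) ≠ 0 := two_ne_zero
    rw [show 2 * (n + 1) = 2 * n + 1 + 1 by ring]
    simp only [ascPochhammer_succ_eval, ih]
    push_cast
    field_simp
    ring

theorem norm_Gamma_le_Gamma_re {s : ℂ} (hs : 0 < s.re) :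
    ‖Complex.Gamma s‖ ≤ Real.Gamma s.re := by
  rw [Complex.Gamma_eq_integral hs, Real.Gamma_eq_integral hs, Complex.GammaIntegral]
  refine (MeasureTheory.norm_integral_le_integral_norm _).trans_eq <|
    MeasureTheory.setIntegral_congr_fun measurableSet_Ioi fun t (ht : 0 < t) => ?_
  simp only [norm_mul, Complex.norm_cpow_eq_rpow_re_of_pos ht, Complex.sub_re, Complex.one_re,
    Complex.norm_of_nonneg (exp_pos _).le]

theorem Gamma_add_natCast_le_mul_factorial {s : ℝ} (hs₀ : 0 < s) (hs₁ : s ≤ 1) (n : ℕ) :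
    Real.Gamma (s + n) ≤ Real.Gamma s * n ! := by
  induction n with
  | zero => simp
  | succ n ih =>
    calc Real.Gamma (s + (n + 1 : ℕ)) = (s + n) * Real.Gamma (s + n) := by
          rw [← Real.Gamma_add_one (by positivity)]
          push_cast
          ring_nf
      _ ≤ (1 + n) * (Real.Gamma s * n !) := by gcongr
      _ = Real.Gamma s * (n + 1)! := by
          rw [Nat.factorial_succ]
          push_cast
          ring

theorem norm_Gamma_add_natCast_le {s : ℂ} (hs₀ : 0 < s.re) (hs₁ : s.re ≤ 1) (n : ℕ) :
    ‖Complex.Gamma (s + n)‖ ≤ Real.Gamma s.re * n ! := by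
  have hre : (s + n).re = s.re + n := by simp
  have hpos : 0 < (s + n).re := by rw [hre]; positivity
  calc ‖Complex.Gamma (s + n)‖ ≤ Real.Gamma (s.re + n) := hre ▸ norm_Gamma_le_Gamma_re hpos
    _ ≤ Real.Gamma s.re * n ! := Gamma_add_natCast_le_mul_factorial hs₀ hs₁ n

theorem Gamma_mul_ascPochhammer_half_mul {a : ℂ} (ha : ∀ m : ℕ, a ≠ -m) (n : ℕ) :
    Complex.Gamma a *
        ((ascPochhammer ℂ n).eval (a / 2) * (ascPochhammer ℂ n).eval ((a + 1) / 2)) =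
      Complex.Gamma (a + (2 * n : ℕ)) / 4 ^ n := by
  have h4 : (4 : ℂ) ^ n ≠ 0 := pow_ne_zero n (by norm_num)
  rw [eq_div_iff h4, mul_assoc, mul_comm _ (4 ^ n), ← ascPochhammer_eval_two_mul,
    ← Complex.Gamma_add_nat_div_Gamma_eq a ha, mul_div_cancel₀ _ (Complex.Gamma_ne_zero ha)]

theorem Gamma_mul_hyp2F1_coeff_eq {a : ℂ} (ha : ∀ m : ℕ, a ≠ -m) (μ n : ℕ) :
    Complex.Gamma a * ((ascPochhammer ℂ n).eval (a / 2) *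
        (ascPochhammer ℂ n).eval ((a + 1) / 2) / ((ascPochhammer ℂ n).eval (μ + 1 : ℂ) * n !)) =
      Complex.Gamma (a + (2 * n : ℕ)) * μ ! / (4 ^ n * ((μ + n)! * n !)) := by
  have hμ : (μ ! : ℂ) ≠ 0 := mod_cast μ.factorial_ne_zero
  rw [← mul_div_assoc, Gamma_mul_ascPochhammer_half_mul ha, ← factorial_mul_ascPochhammer ℂ μ n]
  field_simp

theorem ne_neg_natCast_of_re_pos {a : ℂ} (ha : 0 < a.re) (m : ℕ) : a ≠ -m := fun h => by
  have hre : a.re = -m := by simpa using congrArg Complex.re h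
  linarith [m.cast_nonneg (α := ℝ)]

theorem norm_Gamma_mul_hyp2F1_coeff_le {s : ℂ} (hs₀ : 0 < s.re) (hs₁ : s.re ≤ 1) (μ n : ℕ) :
    ‖Complex.Gamma (s + μ) * ((ascPochhammer ℂ n).eval ((s + μ) / 2) *
        (ascPochhammer ℂ n).eval ((s + μ + 1) / 2) /
          ((ascPochhammer ℂ n).eval (μ + 1 : ℂ) * n !))‖ ≤
      Real.Gamma s.re * (2 ^ μ * μ !) := by
  have : 0 < Real.Gamma s.re := Real.Gamma_pos_of_pos hs₀
  have hfact : ((μ + 2 * n)! : ℝ) ≤ 2 ^ μ * (4 ^ n * ((μ + n)! * n !)) := by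
    have h := factorial_add_le_two_pow_mul (μ + n) n
    rw [show μ + n + n = μ + 2 * n by ring, pow_add, pow_mul, mul_assoc] at h
    exact_mod_cast h
  have hpos : 0 < (s + μ).re := by
    rw [Complex.add_re, Complex.natCast_re]
    positivity
  rw [Gamma_mul_hyp2F1_coeff_eq (ne_neg_natCast_of_re_pos hpos), add_assoc s, ← Nat.cast_add]
  simp only [norm_mul, norm_div, norm_pow, Complex.norm_natCast, Complex.norm_ofNat]
  rw [div_le_iff₀ (by positivity)]
  calc ‖Complex.Gamma (s + (μ + 2 * n : ℕ))‖ * μ !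
      ≤ Real.Gamma s.re * (μ + 2 * n)! * μ ! := by
        gcongr
        exact norm_Gamma_add_natCast_le hs₀ hs₁ _
    _ ≤ Real.Gamma s.re * (2 ^ μ * (4 ^ n * ((μ + n)! * n !))) * μ ! := by gcongr
    _ = Real.Gamma s.re * (2 ^ μ * μ !) * (4 ^ n * ((μ + n)! * n !)) := by ring

theorem norm_Gamma_mul_norm_hyp2F1_le {s : ℂ} (hs₀ : 0 < s.re) (hs₁ : s.re ≤ 1) (μ : ℕ)
    {z : ℂ} (hz : ‖z‖ < 1) :
    ‖Complex.Gamma (s + μ)‖ * ‖hyp2F1 ((s + μ) / 2) ((s + μ + 1) / 2) (μ + 1) z‖ ≤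
      Real.Gamma s.re * (2 ^ μ * μ !) * (1 - ‖z‖)⁻¹ := by
  rw [← norm_mul, hyp2F1, ← tsum_mul_left]
  refine tsum_of_norm_bounded
    ((hasSum_geometric_of_lt_one (norm_nonneg z) hz).mul_left _) fun n => ?_
  rw [← mul_assoc, norm_mul, norm_pow]
  gcongr
  exact norm_Gamma_mul_hyp2F1_coeff_le hs₀ hs₁ μ n

theorem inv_one_sub_tanh_sq (x : ℝ) : (1 - tanh x ^ 2)⁻¹ = cosh x ^ 2 := by
  have hcosh : cosh x ≠ 0 := (cosh_pos x).ne'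
  rw [tanh_eq_sinh_div_cosh, div_pow, one_sub_div (pow_ne_zero 2 hcosh), cosh_sq_sub_sinh_sq,
    one_div, inv_inv]

theorem strictMono_tanh : StrictMono tanh := fun x y hxy =>
  (artanh_lt_artanh_iff ⟨neg_one_lt_tanh x, tanh_lt_one x⟩ ⟨neg_one_lt_tanh y, tanh_lt_one y⟩).1
    (by rwa [artanh_tanh, artanh_tanh])

theorem norm_legE (k : ℝ) (μ : ℕ) {x : ℝ} (hx : 0 ≤ x) :
    ‖legE k μ x‖ = tanh x ^ ((μ : ℝ) + 1 / 2) / (2 ^ μ * μ !) *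
      ‖hyp2F1 ((1 / 2 + Complex.I * k + μ) / 2) ((1 / 2 + Complex.I * k + μ + 1) / 2) (μ + 1)
        ((tanh x ^ 2 : ℝ) : ℂ)‖ := by
  have htwo : ‖(2 : ℂ) ^ (-(μ : ℂ))‖ = (2 ^ μ)⁻¹ := by
    rw [Complex.cpow_neg, Complex.cpow_natCast, norm_inv, norm_pow, Complex.norm_ofNat]
  have hcosh : ‖(cosh x : ℂ) ^ (-(Complex.I * k))‖ = 1 := by
    rw [Complex.norm_cpow_eq_rpow_re_of_pos (cosh_pos x)]
    simp
  have htanh : 0 ≤ tanh x ^ ((μ : ℝ) + 1 / 2) :=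
    rpow_nonneg (tanh_zero ▸ strictMono_tanh.monotone hx) _
  have ha : (μ : ℂ) + 1 / 2 + Complex.I * k = 1 / 2 + Complex.I * k + μ := by ring
  have hb : (μ : ℂ) + 3 / 2 + Complex.I * k = 1 / 2 + Complex.I * k + μ + 1 := by ring
  simp only [legE, norm_mul, htwo, hcosh, Complex.norm_of_nonneg htanh, norm_inv,
    Complex.norm_natCast, ha, hb]
  field_simp

theorem norm_Gamma_mul_norm_legE_le (k : ℝ) (μ : ℕ) {x : ℝ} (hx : 0 ≤ x) :
    ‖Complex.Gamma (1 / 2 + μ + Complex.I * k)‖ * ‖legE k μ x‖ ≤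
      √π * cosh x ^ 2 * tanh x ^ ((μ : ℝ) + 1 / 2) := by
  set s : ℂ := 1 / 2 + Complex.I * k with hs
  have hre : s.re = 1 / 2 := by simp [hs]
  have hz : ‖((tanh x ^ 2 : ℝ) : ℂ)‖ = tanh x ^ 2 := Complex.norm_of_nonneg (sq_nonneg _)
  have hF := norm_Gamma_mul_norm_hyp2F1_le (s := s) (by norm_num [hre]) (by norm_num [hre]) μ
    (hz.trans_lt (tanh_sq_lt_one x))
  rw [hz, hre, Gamma_one_half_eq, inv_one_sub_tanh_sq] at hF
  have htanh : 0 ≤ tanh x ^ ((μ : ℝ) + 1 / 2) :=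
    rpow_nonneg (tanh_zero ▸ strictMono_tanh.monotone hx) _
  rw [norm_legE k μ hx, ← hs, show 1 / 2 + (μ : ℂ) + Complex.I * k = s + μ by rw [hs]; ring,
    mul_left_comm]
  calc _ ≤ tanh x ^ ((μ : ℝ) + 1 / 2) / (2 ^ μ * μ !) * (√π * (2 ^ μ * μ !) * cosh x ^ 2) := by
        gcongr
    _ = √π * cosh x ^ 2 * tanh x ^ ((μ : ℝ) + 1 / 2) := by field_simp

theorem legE_large_mu_decay_general {x : ℝ} (hx : 0 < x) :
    ∃ β > 0, ∃ C > 0, ∀ (k : ℝ) (μ : ℕ),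
      ‖Complex.Gamma (1 / 2 + μ + Complex.I * k)‖ * ‖legE k μ x‖ ≤ C * Real.exp (-β * μ) := by
  have htanh : 0 < tanh x := tanh_zero ▸ strictMono_tanh hx
  have := cosh_pos x
  refine ⟨-log (tanh x), neg_pos.2 (log_neg htanh (tanh_lt_one x)),
    √π * cosh x ^ 2 * tanh x ^ (1 / 2 : ℝ), by positivity, fun k μ => ?_⟩
  calc ‖Complex.Gamma (1 / 2 + μ + Complex.I * k)‖ * ‖legE k μ x‖
      ≤ √π * cosh x ^ 2 * tanh x ^ ((μ : ℝ) + 1 / 2) := norm_Gamma_mul_norm_legE_le k μ hx.le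
    _ = √π * cosh x ^ 2 * tanh x ^ (1 / 2 : ℝ) * exp (- -log (tanh x) * μ) := by
        rw [rpow_add htanh, rpow_def_of_pos htanh μ, neg_neg]
        ring

/-- For fixed `k > 0` and `x > 0` there are `β > 0` and `C > 0` with
`|Γ(1/2+μ+ik)| · |E(k,μ,x)| ≤ C e^{-βμ}` for every integer `μ ≥ 0`;
equivalently `|𝖯^{μ}_{ik-1/2}(cosh x)| ≤ C e^{-βμ}/|Γ(1/2-μ+ik)|`. -/
theorem legE_large_mu_decay (k x : ℝ) (hk : 0 < k) (hx : 0 < x) :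
    ∃ β > 0, ∃ C > 0, ∀ μ : ℕ,
      ‖Complex.Gamma (1 / 2 + μ + Complex.I * k)‖ * ‖legE k μ x‖ ≤
        C * Real.exp (-β * μ) := by
  obtain ⟨β, hβ, C, hC, hdecay⟩ := legE_large_mu_decay_general hx
  exact ⟨β, hβ, C, hC, hdecay k⟩
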